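/- Let N := {(a₁,a₂,a₃,a₄) ∈ ℤ⁴ : a₁+a₂+a₃+a₄ = 0}, and let Q be the free ℤ-module on four generators e₁₃, e₂₃, e₁₄, e₂₄. Define ℤ-linear maps φ : ℤ → Q by φ(1) := e₁₃ − e₂₃ − e₁₄ + e₂₄, and π : Q → N by π(e_{ij}) := eᵢ − eⱼ (where e₁,…,e₄ is the standard basis of ℤ⁴). Then the sequence 0 → ℤ → Q → N → 0 is exact: φ is injective, π is surjective onto N, and ker π = im φ. Moreover, let V := ⟨(1 2),(3 4)⟩ ⊆ S₄ act ℤ-linearly on Q by g·e_{ij} := e_{g(i)g(j)} and on N by permuting coordinates; then π is V-equivariant, and for every g ∈ V one has g·φ(1) = sgn(g)·φ(1), where sgn denotes the sign of the permutation. -/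

import Mathlib

/-- The Klein four-subgroup `V = ⟨(1 2), (3 4)⟩` of `S₄` (with `{1,2,3,4}` encoded as
`{0,1,2,3} = Fin 4`). -/
def V : Subgroup (Equiv.Perm (Fin 4)) :=
  Subgroup.closure {Equiv.swap 0 1, Equiv.swap 2 3}

/-- Encoding of the first indices: `1 ↦ 0`, `2 ↦ 1`. -/
def emb1 : Fin 2 → Fin 4 := ![0, 1]

/-- Encoding of the second indices: `3 ↦ 2`, `4 ↦ 3`. -/
def emb2 : Fin 2 → Fin 4 := ![2, 3]

/-- `Q` is the free `ℤ`-module on the four generators `e₁₃, e₂₃, e₁₄, e₂₄`; the generator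
`e_{ij}` (with `i ∈ {1,2}`, `j ∈ {3,4}`) is `eQ (i, j)` under the above encoding. -/
def eQ (p : Fin 2 × Fin 2) : Fin 2 × Fin 2 → ℤ := Pi.single p 1

/-- `N = {(a₁,a₂,a₃,a₄) ∈ ℤ⁴ : a₁+a₂+a₃+a₄ = 0}`. -/
def Nlat : Submodule ℤ (Fin 4 → ℤ) :=
  LinearMap.ker (∑ i : Fin 4, LinearMap.proj i)

lemma V_cases (g : Equiv.Perm (Fin 4)) (hg : g ∈ V) :
    g = 1 ∨ g = Equiv.swap 0 1 ∨ g = Equiv.swap 2 3 ∨ g = Equiv.swap 0 1 * Equiv.swap 2 3 := by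
  unfold V at hg
  induction hg using Subgroup.closure_induction with
  | mem x hx =>
    rcases hx with rfl | hx
    · exact Or.inr (Or.inl rfl)
    · exact Or.inr (Or.inr (Or.inl hx))
  | one => exact Or.inl rfl
  | mul x y _ _ hx hy =>
    rcases hx with rfl | rfl | rfl | rfl <;> rcases hy with rfl | rfl | rfl | rfl <;> decide
  | inv x _ hx =>
    rcases hx with rfl | rfl | rfl | rfl <;> decide

/-- The induced permutation of index pairs. -/
def sig (g : Equiv.Perm (Fin 4)) : Equiv.Perm (Fin 2 × Fin 2) :=
  Equiv.prodCongr (if g 0 = 0 then 1 else Equiv.swap 0 1) (if g 2 = 2 then 1 else Equiv.swap 0 1)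

lemma sig_mul (g h : Equiv.Perm (Fin 4)) (hg : g ∈ V) (hh : h ∈ V) :
    sig (g * h) = sig g * sig h := by
  rcases V_cases g hg with rfl | rfl | rfl | rfl <;>
    rcases V_cases h hh with rfl | rfl | rfl | rfl <;> decide

/-- The action on `Q`. -/
def rhoQ : V →* ((Fin 2 × Fin 2 → ℤ) ≃ₗ[ℤ] (Fin 2 × Fin 2 → ℤ)) :=
  MonoidHom.mk' (fun g => LinearEquiv.funCongrLeft ℤ ℤ (sig g.1)⁻¹) (by
    intro g h
    ext f p
    simp [sig_mul g.1 h.1 g.2 h.2, LinearEquiv.mul_apply, LinearEquiv.funCongrLeft_apply,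
      LinearMap.funLeft_apply])

lemma rhoQ_apply (g : V) (f : Fin 2 × Fin 2 → ℤ) (p : Fin 2 × Fin 2) :
    rhoQ g f p = f ((sig g.1)⁻¹ p) := rfl

/-- The map `π`. -/
def piQ : (Fin 2 × Fin 2 → ℤ) →ₗ[ℤ] (Fin 4 → ℤ) where
  toFun f := ![f (0, 0) + f (0, 1), f (1, 0) + f (1, 1), -(f (0, 0) + f (1, 0)),
    -(f (0, 1) + f (1, 1))]
  map_add' f g := by
    ext i; fin_cases i <;> simp <;> ring
  map_smul' c f := by
    ext i; fin_cases i <;> simp <;> ring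

lemma piQ_apply (f : Fin 2 × Fin 2 → ℤ) : piQ f = ![f (0, 0) + f (0, 1), f (1, 0) + f (1, 1),
    -(f (0, 0) + f (1, 0)), -(f (0, 1) + f (1, 1))] := rfl

/-- The map `φ`. -/
def phiQ : ℤ →ₗ[ℤ] (Fin 2 × Fin 2 → ℤ) where
  toFun n := fun p => if p.1 = p.2 then n else -n
  map_add' a b := by
    ext p; simp only [Pi.add_apply]; split_ifs <;> ring
  map_smul' c f := by
    ext p; simp

lemma phiQ_apply (n : ℤ) (p : Fin 2 × Fin 2) : phiQ n p = if p.1 = p.2 then n else -n := rfl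

/-- With `φ : ℤ → Q`, `φ(1) = e₁₃ - e₂₃ - e₁₄ + e₂₄` and `π : Q → ℤ⁴`,
`π(e_{ij}) = eᵢ - eⱼ`, the sequence `0 → ℤ → Q → N → 0` is exact: `φ` is injective, the range
of `π` is exactly `N`, and `ker π = im φ`. Moreover, letting `V = ⟨(1 2),(3 4)⟩` act
`ℤ`-linearly on `Q` by `g ⬝ e_{ij} = e_{g(i)g(j)}` and on `ℤ⁴` by permuting coordinates,
`π` is `V`-equivariant, and `g ⬝ φ(1) = sgn(g) ⬝ φ(1)` for every `g ∈ V`. -/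
theorem exact_sequence_of_lattices :
    ∃ (ρ : V →* ((Fin 2 × Fin 2 → ℤ) ≃ₗ[ℤ] (Fin 2 × Fin 2 → ℤ)))
      (π : (Fin 2 × Fin 2 → ℤ) →ₗ[ℤ] (Fin 4 → ℤ))
      (φ : ℤ →ₗ[ℤ] (Fin 2 × Fin 2 → ℤ)),
      -- the action: `g ⬝ e_{ij} = e_{g(i)g(j)}`
      (∀ g : V, ∀ p q : Fin 2 × Fin 2,
        (g : Equiv.Perm (Fin 4)) (emb1 p.1) = emb1 q.1 →
        (g : Equiv.Perm (Fin 4)) (emb2 p.2) = emb2 q.2 →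
        ρ g (eQ p) = eQ q) ∧
      -- `π (e_{ij}) = eᵢ - eⱼ`
      (∀ p : Fin 2 × Fin 2,
        π (eQ p) = Pi.single (emb1 p.1) 1 - Pi.single (emb2 p.2) 1) ∧
      -- `φ (1) = e₁₃ - e₂₃ - e₁₄ + e₂₄`
      φ 1 = eQ (0, 0) - eQ (1, 0) - eQ (0, 1) + eQ (1, 1) ∧
      -- exactness of `0 → ℤ → Q → N → 0`
      Function.Injective φ ∧
      LinearMap.range π = Nlat ∧
      LinearMap.ker π = LinearMap.range φ ∧
      -- `π` is `V`-equivariant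
      (∀ g : V, π.comp (ρ g).toLinearMap =
        (LinearMap.funLeft ℤ ℤ ⇑((g : Equiv.Perm (Fin 4))⁻¹)).comp π) ∧
      -- `g ⬝ φ(1) = sgn(g) ⬝ φ(1)`
      (∀ g : V, ρ g (φ 1) =
        ((Equiv.Perm.sign (g : Equiv.Perm (Fin 4)) : ℤˣ) : ℤ) • φ 1) := by
  refine ⟨rhoQ, piQ, phiQ, ?_, ?_, ?_, ?_, ?_, ?_, ?_, ?_⟩
  · intro g p q h1 h2
    have key : sig g.1 p = q := by
      obtain ⟨g, hg⟩ := g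
      simp only at h1 h2 ⊢
      clear * - h1 h2 hg
      rcases V_cases g hg with rfl | rfl | rfl | rfl <;> clear hg <;> revert p q <;> decide
    ext r
    rw [rhoQ_apply, eQ, eQ, Pi.single_apply, Pi.single_apply, ← key]
    simp only [Equiv.Perm.inv_eq_iff_eq]
  · intro p
    rw [piQ_apply]
    unfold eQ
    revert p
    decide
  · ext p
    revert p
    unfold eQ
    decide
  · intro a b h
    exact congrFun h (0, 0)
  · ext x
    simp only [LinearMap.mem_range, Nlat, LinearMap.mem_ker, LinearMap.add_apply,
      LinearMap.proj_apply, Fin.sum_univ_four]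
    constructor
    · rintro ⟨f, rfl⟩
      simp [piQ_apply]
      ring
    · intro h
      refine ⟨fun p => if p = (0, 0) then x 0 else if p = (0, 1) then 0
        else if p = (1, 0) then - x 2 - x 0 else - x 3, ?_⟩
      rw [piQ_apply]
      ext i
      fin_cases i <;> simp <;> linarith
  · ext f
    simp only [LinearMap.mem_range, LinearMap.mem_ker]
    constructor
    · intro h
      rw [piQ_apply] at h
      have h0 := congrFun h 0
      have h1 := congrFun h 1
      have h2 := congrFun h 2
      have h3 := congrFun h 3
      simp at h0 h1 h2 h3
      refine ⟨f (0, 0), ?_⟩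
      ext ⟨i, j⟩
      rw [phiQ_apply]
      fin_cases i <;> fin_cases j <;> simp <;> linarith
    · rintro ⟨n, rfl⟩
      rw [piQ_apply]
      ext i
      fin_cases i <;> simp [phiQ_apply]
  · rintro ⟨g, hg⟩
    refine LinearMap.ext fun f => ?_
    have e : ∀ p, rhoQ ⟨g, hg⟩ f p = f ((sig g)⁻¹ p) := fun p => rfl
    simp only [LinearMap.comp_apply, LinearEquiv.coe_coe, piQ_apply, e]
    ext i
    rw [LinearMap.funLeft_apply]
    rcases V_cases g hg with rfl | rfl | rfl | rfl <;> clear e hg <;> fin_cases i <;>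
      simp [sig, Equiv.swap_apply_def, Equiv.Perm.inv_def,
        show Equiv.symm (1 : Equiv.Perm (Fin 2)) = 1 from rfl] <;> ring
  · rintro ⟨g, hg⟩
    ext p
    rw [rhoQ_apply, Pi.smul_apply, phiQ_apply, phiQ_apply]
    change (if ((sig g)⁻¹ p).1 = ((sig g)⁻¹ p).2 then (1 : ℤ) else -1) =
      ((Equiv.Perm.sign g : ℤˣ) : ℤ) • (if p.1 = p.2 then (1 : ℤ) else -1)
    rcases V_cases g hg with rfl | rfl | rfl | rfl <;> clear hg <;> revert p <;> decide
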